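/- arXiv:1608.04114 — 2 statements merged into one kernel-verified Lean document; each statement's English description precedes it below -/
import Mathlib

section
/- Let α, β > -1, s ∈ ℕ, θ ∈ [-1,1], and let λ_0,…,λ_{s-1} be positive constants. Then the polynomials 𝒥_{n,θ}^{α-s,β-s}, n ≥ 0, are mutually orthogonal with respect to the Sobolev inner product ⟨·,·⟩_{α,β}^{-s}, and their norms are given by ⟨𝒥_{n,θ}^{α-s,β-s}, 𝒥_{n,θ}^{α-s,β-s}⟩_{α,β}^{-s} = λ_n for 0 ≤ n ≤ s-1 and = h_{n-s}^{α,β} for n ≥ s. -/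
open MeasureTheory Set ENNReal NNReal

noncomputable section

namespace JacobiApprox

/-- The Jacobi weight `w_{α,β}(x) = (1-x)^α (1+x)^β` on `(-1,1)`. -/
def w (α β x : ℝ) : ℝ := (1 - x) ^ α * (1 + x) ^ β

/-- The weighted `L^p` norm `‖f‖_{L^p(w_{α,β})}`; for `p = ∞` it is the uniform
norm on `[-1,1]`. -/
def LpW (α β : ℝ) (p : ℝ≥0∞) (f : ℝ → ℝ) : ℝ :=
  if p = ⊤ then sSup ((fun x => |f x|) '' Icc (-1 : ℝ) 1)
  else (∫ x in Ioo (-1 : ℝ) 1, |f x| ^ p.toReal * w α β x) ^ (1 / p.toReal)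

/-- Membership in `L^p(w_{α,β})` (`f ∈ C[-1,1]` when `p = ∞`). -/
def MemLpW (α β : ℝ) (p : ℝ≥0∞) (f : ℝ → ℝ) : Prop :=
  Measurable f ∧
    (p ≠ ⊤ → IntegrableOn (fun x => |f x| ^ p.toReal * w α β x) (Ioo (-1 : ℝ) 1)) ∧
    (p = ⊤ → ContinuousOn f (Icc (-1 : ℝ) 1))

/-- `E_n(f)_{L^p(w_{α,β})}`: the error of best approximation of `f` by polynomials
of degree at most `n` in `L^p(w_{α,β})`. -/
def E (α β : ℝ) (p : ℝ≥0∞) (n : ℕ) (f : ℝ → ℝ) : ℝ :=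
  sInf {r : ℝ | ∃ q : Polynomial ℝ, q.natDegree ≤ n ∧
    r = LpW α β p (fun x => f x - q.eval x)}

/-- Membership in the Sobolev space `W_p^s(w_{α,β})`: `f` has `s` continuous
derivatives and `f^{(s)} ∈ L^p(w_{α,β})` (for `p = ∞` this is `f ∈ C^s[-1,1]`). -/
def MemW (α β : ℝ) (p : ℝ≥0∞) (s : ℕ) (f : ℝ → ℝ) : Prop :=
  ContDiff ℝ (s : ℕ∞) f ∧
    (p ≠ ⊤ → IntegrableOn (fun x => |iteratedDeriv s f x| ^ p.toReal * w α β x)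
      (Ioo (-1 : ℝ) 1))

/-- The Sobolev norm `‖f‖_{W_p^s(w_{α,β})}` (max over derivatives when `p = ∞`). -/
def WNorm (α β : ℝ) (p : ℝ≥0∞) (s : ℕ) (f : ℝ → ℝ) : ℝ :=
  if p = ⊤ then
    (Finset.range (s + 1)).sup' (Finset.nonempty_range_iff.mpr (Nat.succ_ne_zero s))
      (fun k => LpW α β ⊤ (iteratedDeriv k f))
  else (∑ k ∈ Finset.range (s + 1), (LpW α β p (iteratedDeriv k f)) ^ p.toReal) ^
    (1 / p.toReal)

/-- Pochhammer symbol (rising factorial) `(a)_k`. -/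
def poch (a : ℝ) (k : ℕ) : ℝ := ∏ i ∈ Finset.range k, (a + i)

/-- The Jacobi polynomial `P_n^{(α,β)}`. -/
def JP (α β : ℝ) (n : ℕ) (t : ℝ) : ℝ :=
  (poch (α + 1) n / n.factorial) *
    ∑ k ∈ Finset.range (n + 1),
      poch (-(n : ℝ)) k * poch ((n : ℝ) + α + β + 1) k /
        (poch (α + 1) k * k.factorial) * ((1 - t) / 2) ^ k

/-- The renormalized Jacobi polynomial `J_n^{α,β} = 2^n/(n+α+β+1)_n · P_n^{(α,β)}`. -/
def J (α β : ℝ) (n : ℕ) (t : ℝ) : ℝ :=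
  2 ^ n / poch ((n : ℝ) + α + β + 1) n * JP α β n t

/-- The inner product `⟨f,g⟩_{α,β} = ∫_{-1}^1 f g w_{α,β}`. -/
def ip (α β : ℝ) (f g : ℝ → ℝ) : ℝ := ∫ x in Ioo (-1 : ℝ) 1, f x * g x * w α β x

/-- `h_n^{α,β} = ⟨J_n^{α,β}, J_n^{α,β}⟩_{α,β}`. -/
def hJ (α β : ℝ) (n : ℕ) : ℝ := ip α β (J α β n) (J α β n)

/-- The Fourier–Jacobi coefficient `\hat f_n^{α,β}`. -/
def coeff (α β : ℝ) (n : ℕ) (f : ℝ → ℝ) : ℝ := ip α β f (J α β n) / hJ α β n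

/-- The `n`-th partial sum `S_n^{α,β} f` of the Fourier–Jacobi series. -/
def S (α β : ℝ) (n : ℕ) (f : ℝ → ℝ) (x : ℝ) : ℝ :=
  ∑ k ∈ Finset.range (n + 1), coeff α β k f * J α β k x

/-- An admissible cut-off function: `C^∞`, `η ≡ 1` on `[0,1]`, `η ≡ 0` on `[2,∞)`. -/
def Admissible (η : ℝ → ℝ) : Prop :=
  ContDiff ℝ (⊤ : ℕ∞) η ∧ (∀ t : ℝ, 0 ≤ t → t ≤ 1 → η t = 1) ∧ ∀ t : ℝ, 2 ≤ t → η t = 0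

/-- The de la Vallée Poussin type operator `V_n^{α,β} f`. -/
def V (η : ℝ → ℝ) (α β : ℝ) (n : ℕ) (f : ℝ → ℝ) (x : ℝ) : ℝ :=
  ∑ k ∈ Finset.range (2 * n + 1), η ((k : ℝ) / (n : ℝ)) * coeff α β k f * J α β k x

/-- The Sobolev orthogonal polynomial `𝒥_{n,θ}^{α-s,β-s}`. -/
def SJ (α β : ℝ) (s : ℕ) (θ : ℝ) (n : ℕ) (x : ℝ) : ℝ :=
  if n < s then (x - θ) ^ n / n.factorial
  else ∫ t in θ..x, (x - t) ^ (s - 1) / (s - 1).factorial * J α β (n - s) t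

/-- The Sobolev inner product `⟨f,g⟩_{α,β}^{-s}`. -/
def ipS (α β : ℝ) (s : ℕ) (θ : ℝ) (lam : ℕ → ℝ) (f g : ℝ → ℝ) : ℝ :=
  ip α β (iteratedDeriv s f) (iteratedDeriv s g) +
    ∑ k ∈ Finset.range s, lam k * iteratedDeriv k f θ * iteratedDeriv k g θ

/-- The Fourier coefficient `\hat{𝔣}_n^{α-s,β-s}` in the Sobolev orthogonal system. -/
def coeffS (α β : ℝ) (s : ℕ) (θ : ℝ) (lam : ℕ → ℝ) (n : ℕ) (f : ℝ → ℝ) : ℝ :=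
  ipS α β s θ lam f (SJ α β s θ n) / ipS α β s θ lam (SJ α β s θ n) (SJ α β s θ n)

/-- The `n`-th partial sum `𝒮_{n,θ}^{α-s,β-s} f` of the Sobolev orthogonal expansion. -/
def SS (α β : ℝ) (s : ℕ) (θ : ℝ) (lam : ℕ → ℝ) (n : ℕ) (f : ℝ → ℝ) (x : ℝ) : ℝ :=
  ∑ k ∈ Finset.range (n + 1), coeffS α β s θ lam k f * SJ α β s θ k x

/-- The operator `𝒱_{n,θ}^{α-s,β-s} f`. -/
def VS (η : ℝ → ℝ) (α β : ℝ) (s : ℕ) (θ : ℝ) (n : ℕ) (f : ℝ → ℝ) (x : ℝ) : ℝ :=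
  (∑ k ∈ Finset.range s, iteratedDeriv k f θ * (x - θ) ^ k / k.factorial) +
    ∫ t in θ..x, (x - t) ^ (s - 1) / (s - 1).factorial *
      V η α β n (iteratedDeriv s f) t

/-- `A_j^{α,β} = (α+β+2)_{2j}/(α+1)_j`. -/
def Acoef (α β : ℝ) (j : ℕ) : ℝ := poch (α + β + 2) (2 * j) / poch (α + 1) j

/-- `B_n^{α,β} = (α+1)_{n+1}/(α+β+2)_{2n+1}`. -/
def Bcoef (α β : ℝ) (n : ℕ) : ℝ := poch (α + 1) (n + 1) / poch (α + β + 2) (2 * n + 1)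

/-- `D_j^{α,β} = (j+β+1)/((2j+α+β+2)(2j+α+β+3))`. -/
def Dcoef (α β : ℝ) (j : ℕ) : ℝ :=
  ((j : ℝ) + β + 1) / ((2 * (j : ℝ) + α + β + 2) * (2 * (j : ℝ) + α + β + 3))

/-- The function `u_{g,k}` of the Aubin–Nitsche duality argument. -/
def u (α β : ℝ) (s k : ℕ) (g : ℝ → ℝ) (x : ℝ) : ℝ :=
  ∫ t in (-1 : ℝ)..x, (x - t) ^ (s - 1) / (s - 1).factorial * (1 / w α β t) *
    ∫ y in t..(1 : ℝ), (y - t) ^ (s - k - 1) / (s - k - 1).factorial * g y * w α β y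

/-- The `s`-th derivative of `u_{g,k}`, given by its explicit formula. -/
def uDs (α β : ℝ) (s k : ℕ) (g : ℝ → ℝ) (x : ℝ) : ℝ :=
  (1 / w α β x) *
    ∫ y in x..(1 : ℝ), (y - x) ^ (s - k - 1) / (s - k - 1).factorial * g y * w α β y



/-! ### Jacobi orthogonality -/

lemma poch_succ (a : ℝ) (k : ℕ) : poch a (k + 1) = poch a k * (a + k) := by
  simp [poch, Finset.prod_range_succ]

lemma poch_ne_zero {a : ℝ} (ha : 0 < a) (k : ℕ) : poch a k ≠ 0 := by
  unfold poch
  exact Finset.prod_ne_zero_iff.mpr fun i _ => by positivity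

lemma poch_neg_eq_zero (n k : ℕ) (h : n < k) : poch (-(n : ℝ)) k = 0 := by
  unfold poch
  exact Finset.prod_eq_zero (Finset.mem_range.mpr h) (by simp)

/-- Hypergeometric coefficient. -/
def hc (α β : ℝ) (n k : ℕ) : ℝ :=
  poch (-(n : ℝ)) k * poch ((n : ℝ) + α + β + 1) k / (poch (α + 1) k * k.factorial)

lemma hc_succ {α : ℝ} (β : ℝ) (hα : -1 < α) (n k : ℕ) :
    hc α β n (k + 1) * (k + 1) * (k + α + 1)
      = (k - n) * (k + n + α + β + 1) * hc α β n k := by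
  have h1 : poch (α + 1) k ≠ 0 := poch_ne_zero (by linarith) k
  have h2 : (k : ℝ) + α + 1 ≠ 0 := by
    have : (0 : ℝ) ≤ k := Nat.cast_nonneg k
    linarith
  have h3 : (k.factorial : ℝ) ≠ 0 := by positivity
  have h5 : (α : ℝ) + 1 + k ≠ 0 := by
    intro h; apply h2; linarith
  have h4 : (k : ℝ) + 1 ≠ 0 := by positivity
  unfold hc
  rw [poch_succ, poch_succ, poch_succ, Nat.factorial_succ]
  push_cast
  field_simp
  ring

/-- The hypergeometric polynomial in `z = (1-t)/2`. -/
def Q (α β : ℝ) (n : ℕ) : Polynomial ℝ :=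
  ∑ k ∈ Finset.range (n + 1), Polynomial.C (hc α β n k) * Polynomial.X ^ k

lemma Q_coeff (α β : ℝ) (n k : ℕ) : (Q α β n).coeff k = hc α β n k := by
  unfold Q
  simp only [Polynomial.finsetSum_coeff, Polynomial.coeff_C_mul, Polynomial.coeff_X_pow]
  simp only [mul_ite, mul_one, mul_zero, Finset.sum_ite_eq, Finset.mem_range]
  split_ifs with h
  · rfl
  · unfold hc
    rw [poch_neg_eq_zero n k (by omega)]; simp

open Polynomial in
lemma Q_ode {α : ℝ} (β : ℝ) (hα : -1 < α) (n : ℕ) :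
    X * derivative (derivative (Q α β n)) - X * (X * derivative (derivative (Q α β n)))
      + C (α + 1) * derivative (Q α β n) - C (α + β + 2) * (X * derivative (Q α β n))
      + C (n * (n + α + β + 1)) * Q α β n = 0 := by
  ext k
  rcases k with _ | _ | k
  · have h := hc_succ β hα n 0
    simp [Q_coeff, coeff_derivative] at h ⊢
    linear_combination h
  · have h := hc_succ β hα n 1
    simp only [coeff_add, coeff_sub, coeff_X_mul, coeff_X_mul_zero, coeff_C_mul,
      coeff_derivative, Q_coeff, coeff_zero]
    norm_num at h ⊢
    linear_combination h
  · have h := hc_succ β hα n (k + 2)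
    simp only [coeff_add, coeff_sub, coeff_X_mul, coeff_C_mul, coeff_derivative, Q_coeff,
      coeff_zero]
    push_cast at h ⊢
    linear_combination h

lemma J_eq (α β : ℝ) (n : ℕ) (t : ℝ) :
    J α β n t = (2 ^ n / poch ((n : ℝ) + α + β + 1) n * (poch (α + 1) n / n.factorial)) *
      (Q α β n).eval ((1 - t) / 2) := by
  unfold J JP Q
  rw [Polynomial.eval_finsetSum, mul_assoc]
  simp [hc]

lemma J_continuous (α β : ℝ) (n : ℕ) : Continuous (J α β n) := by
  have : J α β n = fun t => _ := funext (J_eq α β n)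
  rw [this]
  fun_prop

lemma w_intervalIntegrable {α β : ℝ} (hα : -1 < α) (hβ : -1 < β) :
    IntervalIntegrable (w α β) volume (-1) 1 := by
  have h1 : IntervalIntegrable (w α β) volume (-1) 0 := by
    have h := (intervalIntegral.intervalIntegrable_rpow' (a := 0) (b := 1) hβ).comp_add_left 1
    norm_num at h
    refine h.continuousOn_mul (g := fun x : ℝ => (1 - x) ^ α) ?_
    refine ContinuousOn.rpow_const (by fun_prop) ?_
    intro x hx
    rw [uIcc_of_le (by norm_num)] at hx
    left; linarith [hx.2]
  have h2 : IntervalIntegrable (w α β) volume 0 1 := by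
    have h := (intervalIntegral.intervalIntegrable_rpow' (a := 0) (b := 1) hα).comp_sub_left 1
    norm_num at h
    refine h.symm.mul_continuousOn (g := fun x : ℝ => (1 + x) ^ β) ?_
    refine ContinuousOn.rpow_const (by fun_prop) ?_
    intro x hx
    rw [uIcc_of_le (by norm_num)] at hx
    left; linarith [hx.1]
  exact h1.trans h2

open Polynomial in
lemma Q_orth {α β : ℝ} (hα : -1 < α) (hβ : -1 < β) {m n : ℕ} (hmn : m ≠ n) :
    ∫ t in (-1 : ℝ)..1, (Q α β m).eval ((1 - t) / 2) * (Q α β n).eval ((1 - t) / 2) * w α β t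
      = 0 := by
  set W : Polynomial ℝ := Q α β n * derivative (Q α β m) - Q α β m * derivative (Q α β n)
    with hW
  set c : ℝ := -2 * (n * (n + α + β + 1) - m * (m + α + β + 1)) with hc
  have hc0 : c ≠ 0 := by
    have : c = -2 * (((n : ℝ) - m) * ((n + m : ℕ) + α + β + 1)) := by
      rw [hc]; push_cast; ring
    rw [this]
    have h1 : (n : ℝ) - m ≠ 0 := sub_ne_zero.mpr (by exact_mod_cast hmn.symm)
    have h2 : (1 : ℝ) ≤ ((n + m : ℕ) : ℝ) := by exact_mod_cast (by omega : 1 ≤ n + m)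
    have h3 : (((n + m : ℕ) : ℝ) + α + β + 1) ≠ 0 := by linarith
    exact mul_ne_zero (by norm_num) (mul_ne_zero h1 h3)
  set F : ℝ → ℝ := fun t => (1 - t) ^ (α + 1) * (1 + t) ^ (β + 1) * W.eval ((1 - t) / 2)
    with hF
  have hint := intervalIntegral.integral_eq_sub_of_hasDerivAt_of_le
    (a := -1) (b := 1) (f := F)
    (f' := fun t => c * ((Q α β m).eval ((1 - t) / 2) * (Q α β n).eval ((1 - t) / 2) * w α β t))
    (by norm_num) ?_ ?_ ?_
  · rw [intervalIntegral.integral_const_mul] at hint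
    have : F 1 - F (-1) = 0 := by
      simp only [hF]
      norm_num
      rw [Real.zero_rpow (by linarith), Real.zero_rpow (by linarith)]
      simp
    rw [this] at hint
    exact (mul_eq_zero.mp hint).resolve_left hc0
  · refine ContinuousOn.mul (ContinuousOn.mul ?_ ?_) (by fun_prop)
    · exact ContinuousOn.rpow_const (by fun_prop) (fun x _ => Or.inr (by linarith))
    · exact ContinuousOn.rpow_const (by fun_prop) (fun x _ => Or.inr (by linarith))
  · intro t ht
    have ht1 : 0 < 1 - t := by linarith [ht.2]
    have ht2 : 0 < 1 + t := by linarith [ht.1]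
    have d1 : HasDerivAt (fun t : ℝ => (1 - t) ^ (α + 1)) (-1 * (α + 1) * (1 - t) ^ α) t := by
      have := (((hasDerivAt_id t).const_sub 1).rpow_const (p := α + 1) (Or.inl ht1.ne'))
      simpa using this
    have d2 : HasDerivAt (fun t : ℝ => (1 + t) ^ (β + 1)) (1 * (β + 1) * (1 + t) ^ β) t := by
      have := (((hasDerivAt_id t).const_add 1).rpow_const (p := β + 1) (Or.inl ht2.ne'))
      simpa using this
    have d3 : HasDerivAt (fun t : ℝ => W.eval ((1 - t) / 2))
        ((derivative W).eval ((1 - t) / 2) * (-1 / 2)) t := by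
      have h0 : HasDerivAt (fun t : ℝ => (1 - t) / 2) (-1 / 2) t :=
        ((hasDerivAt_id t).const_sub 1).div_const 2
      exact (W.hasDerivAt ((1 - t) / 2)).comp t h0
    refine ((d1.mul d2).mul d3).congr_deriv ?_
    have e1 : (1 - t) ^ (α + 1) = (1 - t) ^ α * (1 - t) := Real.rpow_add_one ht1.ne' α
    have e2 : (1 + t) ^ (β + 1) = (1 + t) ^ β * (1 + t) := Real.rpow_add_one ht2.ne' β
    have o1 := congrArg (eval ((1 - t) / 2)) (Q_ode β hα n)
    have o2 := congrArg (eval ((1 - t) / 2)) (Q_ode β hα m)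
    simp only [Pi.mul_apply, e1, e2, w, hW, hc]
    simp only [eval_add, eval_sub, eval_mul, eval_X, eval_C, eval_zero, derivative_sub,
      derivative_mul] at o1 o2 ⊢
    linear_combination (-2 * (1 - t) ^ α * (1 + t) ^ β) *
      ((Q α β n).eval ((1 - t) / 2) * o2 - (Q α β m).eval ((1 - t) / 2) * o1)
  · refine IntervalIntegrable.const_mul ?_ c
    exact (w_intervalIntegrable hα hβ).continuousOn_mul (by fun_prop)

lemma J_orth {α β : ℝ} (hα : -1 < α) (hβ : -1 < β) {m n : ℕ} (hmn : m ≠ n) :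
    ip α β (J α β m) (J α β n) = 0 := by
  unfold ip
  rw [← integral_Ioc_eq_integral_Ioo, ← intervalIntegral.integral_of_le (by norm_num)]
  simp only [J_eq]
  generalize (2 ^ m / poch ((m : ℝ) + α + β + 1) m * (poch (α + 1) m / m.factorial)) = a
  generalize (2 ^ n / poch ((n : ℝ) + α + β + 1) n * (poch (α + 1) n / n.factorial)) = b
  have := Q_orth hα hβ hmn
  rw [← mul_zero (a * b), ← this, ← intervalIntegral.integral_const_mul]
  congr 1
  ext t
  ring

/-! ### Derivatives of the Sobolev polynomials -/

/-- Iterated integral kernel. -/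
def Iker (θ : ℝ) (s : ℕ) (f : ℝ → ℝ) (x : ℝ) : ℝ :=
  ∫ t in θ..x, (x - t) ^ s / s.factorial * f t

lemma prim_hasDerivAt (θ : ℝ) {f : ℝ → ℝ} (hf : Continuous f) (x : ℝ) :
    HasDerivAt (fun y => ∫ t in θ..y, f t) (f x) x :=
  intervalIntegral.integral_hasDerivAt_right (hf.intervalIntegrable _ _)
    hf.stronglyMeasurable.stronglyMeasurableAtFilter hf.continuousAt

lemma Iker_succ (θ : ℝ) (s : ℕ) {f : ℝ → ℝ} (hf : Continuous f) :
    Iker θ (s + 1) f = Iker θ s (fun y => ∫ t in θ..y, f t) := by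
  ext x
  unfold Iker
  have hu : ∀ t : ℝ, HasDerivAt (fun t : ℝ => (x - t) ^ (s + 1) / ((s + 1).factorial : ℝ))
      (-((x - t) ^ s / (s.factorial : ℝ))) t := by
    intro t
    have := ((((hasDerivAt_id t).const_sub x).pow (s + 1)).div_const ((s + 1).factorial : ℝ))
    refine this.congr_deriv ?_
    rw [Nat.factorial_succ]
    have : (s.factorial : ℝ) ≠ 0 := by positivity
    push_cast
    simp
    field_simp
  have h := intervalIntegral.integral_mul_deriv_eq_deriv_mul (a := θ) (b := x)
    (u := fun t : ℝ => (x - t) ^ (s + 1) / ((s + 1).factorial : ℝ))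
    (v := fun y => ∫ t in θ..y, f t)
    (u' := fun t => -((x - t) ^ s / (s.factorial : ℝ))) (v' := f)
    (fun t _ => hu t) (fun t _ => prim_hasDerivAt θ hf t)
    (Continuous.intervalIntegrable (by fun_prop) _ _) (hf.intervalIntegrable _ _)
  rw [h]
  simp

lemma Iker_deriv (θ : ℝ) (s : ℕ) : ∀ {f : ℝ → ℝ}, Continuous f →
    iteratedDeriv (s + 1) (Iker θ s f) = f ∧
      ∀ k, k < s + 1 → iteratedDeriv k (Iker θ s f) θ = 0 := by
  induction s with
  | zero =>
    intro f hf
    have h : Iker θ 0 f = fun y => ∫ t in θ..y, f t := by ext; simp [Iker]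
    rw [h]
    constructor
    · rw [iteratedDeriv_one]
      ext x
      exact (prim_hasDerivAt θ hf x).deriv
    · intro k hk
      obtain rfl : k = 0 := by omega
      simp
  | succ s ih =>
    intro f hf
    rw [Iker_succ θ s hf]
    have hc : Continuous (fun y => ∫ t in θ..y, f t) :=
      continuous_iff_continuousAt.mpr fun x => (prim_hasDerivAt θ hf x).continuousAt
    obtain ⟨h1, h2⟩ := ih hc
    constructor
    · rw [iteratedDeriv_succ, h1]
      ext x
      exact (prim_hasDerivAt θ hf x).deriv
    · intro k hk
      rcases Nat.lt_succ_iff_lt_or_eq.mp hk with h | rfl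
      · exact h2 k h
      · rw [h1]; simp

lemma mono_deriv (θ : ℝ) (k : ℕ) : ∀ n : ℕ,
    iteratedDeriv k (fun x : ℝ => (x - θ) ^ n / (n.factorial : ℝ)) =
      if k ≤ n then (fun x : ℝ => (x - θ) ^ (n - k) / ((n - k).factorial : ℝ)) else 0 := by
  induction k with
  | zero => intro n; simp
  | succ k ih =>
    intro n
    rw [iteratedDeriv_succ, ih]
    rcases lt_trichotomy k n with h | rfl | h
    · rw [if_pos h.le, if_pos (by omega)]
      obtain ⟨d, rfl⟩ : ∃ d, n = k + 1 + d := ⟨n - (k + 1), by omega⟩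
      have e1 : k + 1 + d - k = d + 1 := by omega
      have e2 : k + 1 + d - (k + 1) = d := by omega
      rw [e1, e2]
      ext x
      have := ((((hasDerivAt_id x).sub_const θ).pow (d + 1)).div_const ((d + 1).factorial : ℝ))
      refine (this.congr_deriv ?_).deriv
      rw [Nat.factorial_succ]
      have : (d.factorial : ℝ) ≠ 0 := by positivity
      push_cast
      simp
      field_simp
    · rw [if_pos le_rfl, if_neg (by omega)]
      ext x
      simp
    · rw [if_neg (by omega), if_neg (by omega)]
      ext x
      simp

lemma SJ_lt_deriv {α β : ℝ} {s : ℕ} {θ : ℝ} {n : ℕ} (h : n < s) :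
    iteratedDeriv s (SJ α β s θ n) = 0 ∧
      ∀ k, iteratedDeriv k (SJ α β s θ n) θ = if k = n then 1 else 0 := by
  have e : SJ α β s θ n = fun x : ℝ => (x - θ) ^ n / (n.factorial : ℝ) := by
    ext x; simp [SJ, h]
  rw [e]
  refine ⟨by rw [mono_deriv, if_neg (by omega)], fun k => ?_⟩
  rw [mono_deriv]
  rcases lt_trichotomy k n with h | rfl | h
  · rw [if_pos h.le, if_neg h.ne]
    simp [show n - k ≠ 0 by omega]
  · simp
  · rw [if_neg (by omega), if_neg (by omega)]; rfl

lemma SJ_ge_deriv {α β : ℝ} {s : ℕ} (hs : 1 ≤ s) {θ : ℝ} {n : ℕ} (h : s ≤ n) :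
    iteratedDeriv s (SJ α β s θ n) = J α β (n - s) ∧
      ∀ k, k < s → iteratedDeriv k (SJ α β s θ n) θ = 0 := by
  obtain ⟨r, rfl⟩ : ∃ r, s = r + 1 := ⟨s - 1, by omega⟩
  have e : SJ α β (r + 1) θ n = Iker θ r (J α β (n - (r + 1))) := by
    ext x; simp [SJ, Iker, Nat.not_lt.mpr h]
  rw [e]
  exact Iker_deriv θ r (J_continuous _ _ _)

theorem statement11 (α β : ℝ) (hα : -1 < α) (hβ : -1 < β) (s : ℕ) (hs : 1 ≤ s)
    (θ : ℝ) (hθ : θ ∈ Icc (-1 : ℝ) 1) (lam : ℕ → ℝ) (hlam : ∀ k, k < s → 0 < lam k) :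
    (∀ m n : ℕ, m ≠ n → ipS α β s θ lam (SJ α β s θ m) (SJ α β s θ n) = 0) ∧
    (∀ n : ℕ, n < s → ipS α β s θ lam (SJ α β s θ n) (SJ α β s θ n) = lam n) ∧
    (∀ n : ℕ, s ≤ n → ipS α β s θ lam (SJ α β s θ n) (SJ α β s θ n) = hJ α β (n - s)) := by
  refine ⟨?_, ?_, ?_⟩
  · intro m n hmn
    unfold ipS
    rcases lt_or_ge m s with hm | hm <;> rcases lt_or_ge n s with hn | hn
    · rw [(SJ_lt_deriv hm).1, Finset.sum_eq_zero]
      · simp [ip]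
      · intro k _
        rw [(SJ_lt_deriv hm).2, (SJ_lt_deriv hn).2]
        split_ifs <;> first | omega | simp
    · rw [(SJ_lt_deriv hm).1, Finset.sum_eq_zero]
      · simp [ip]
      · intro k hk
        rw [(SJ_ge_deriv hs hn).2 k (Finset.mem_range.mp hk), mul_zero]
    · rw [(SJ_lt_deriv hn).1, Finset.sum_eq_zero]
      · simp [ip]
      · intro k hk
        rw [(SJ_ge_deriv hs hm).2 k (Finset.mem_range.mp hk), mul_zero, zero_mul]
    · rw [(SJ_ge_deriv hs hm).1, (SJ_ge_deriv hs hn).1, J_orth hα hβ (by omega),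
        Finset.sum_eq_zero]
      · simp
      · intro k hk
        rw [(SJ_ge_deriv hs hn).2 k (Finset.mem_range.mp hk), mul_zero]
  · intro n hn
    unfold ipS
    rw [(SJ_lt_deriv hn).1]
    simp only [(SJ_lt_deriv hn).2]
    simp [ip, hn]
  · intro n hn
    unfold ipS
    rw [(SJ_ge_deriv hs hn).1, Finset.sum_eq_zero]
    · simp [hJ]
    · intro k hk
      rw [(SJ_ge_deriv hs hn).2 k (Finset.mem_range.mp hk), mul_zero]

end JacobiApprox
end
end

section
/- Let α, β > -1 and 1 < p < ∞. There exists a constant c > 0 such that (∫_{-1}^1 (∫_{-1}^x |f(t)| dt)^p w_{α,β}(x) dx)^{1/p} ≤ c (∫_{-1}^1 |f(x)|^p w_{α,β}(x) dx)^{1/p} for all f ∈ L^p(w_{α,β}) if and only if β < p - 1. -/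
open MeasureTheory Set ENNReal NNReal

noncomputable section

namespace JacobiApprox

theorem w_nonneg_aux (a b x : ℝ) (hx : x ∈ Ioo (-1 : ℝ) 1) : 0 ≤ w a b x := by
  have h1 : 0 < 1 - x := by linarith [hx.2]
  have h2 : 0 < 1 + x := by linarith [hx.1]
  unfold w; positivity

theorem w_pos_aux (a b x : ℝ) (hx : x ∈ Ioo (-1 : ℝ) 1) : 0 < w a b x := by
  have h1 : 0 < 1 - x := by linarith [hx.2]
  have h2 : 0 < 1 + x := by linarith [hx.1]
  unfold w; positivity

theorem w_meas_aux (a b : ℝ) : Measurable (w a b) := by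
  unfold w; fun_prop

theorem w_integrableOn_aux (a b : ℝ) (ha : -1 < a) (hb : -1 < b) :
    IntegrableOn (w a b) (Ioo (-1 : ℝ) 1) := by
  have key1 : ∀ c : ℝ, -1 < c → IntegrableOn (fun x : ℝ => (1 + x) ^ c) (Icc (-1 : ℝ) 0) := by
    intro c hc
    have h := (intervalIntegral.intervalIntegrable_rpow' (a := 0) (b := 1) hc).comp_add_left 1
    norm_num at h
    rw [intervalIntegrable_iff_integrableOn_Icc_of_le (by norm_num)] at h
    exact h
  have key2 : ∀ c : ℝ, -1 < c → IntegrableOn (fun x : ℝ => (1 - x) ^ c) (Icc (0 : ℝ) 1) := by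
    intro c hc
    have h := (intervalIntegral.intervalIntegrable_rpow' (a := 0) (b := 1) hc).comp_sub_left 1
    norm_num at h
    have h := h.symm
    rw [intervalIntegrable_iff_integrableOn_Icc_of_le (by norm_num)] at h
    exact h
  have i1 : IntegrableOn (w a b) (Icc (-1 : ℝ) 0) := by
    have hc : ContinuousOn (fun x : ℝ => (1 - x) ^ a) (Icc (-1 : ℝ) 0) := by
      apply ContinuousOn.rpow_const (by fun_prop)
      intro x hx; left; have := hx.2; linarith
    exact (key1 b hb).continuousOn_mul hc isCompact_Icc
  have i2 : IntegrableOn (w a b) (Icc (0 : ℝ) 1) := by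
    have hc : ContinuousOn (fun x : ℝ => (1 + x) ^ b) (Icc (0 : ℝ) 1) := by
      apply ContinuousOn.rpow_const (by fun_prop)
      intro x hx; left; have := hx.1; linarith
    exact (key2 a ha).mul_continuousOn hc isCompact_Icc
  refine (i1.union i2).mono_set ?_
  intro x hx
  rcases le_total x 0 with h | h
  · left; exact ⟨hx.1.le, h⟩
  · right; exact ⟨h, hx.2.le⟩

theorem w_lint_aux (a b : ℝ) (ha : -1 < a) (hb : -1 < b) :
    ∫⁻ x in Ioo (-1 : ℝ) 1, ENNReal.ofReal (w a b x) < ⊤ := by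
  exact (w_integrableOn_aux a b ha hb).lintegral_lt_top

/-- pointwise Hoelder bound -/
theorem hardy_pt_aux (α β p : ℝ) (hp : 1 < p) (f : ℝ → ℝ)
    (hf : Measurable f) (x : ℝ) (hx : x ∈ Ioo (-1 : ℝ) 1) :
    (∫⁻ t in Ioo (-1 : ℝ) x, ENNReal.ofReal |f t|) ^ p * ENNReal.ofReal ((1 - x) ^ (max α 0)) ≤
      ENNReal.ofReal (2 ^ (max α 0 - α)) *
      (∫⁻ t in Ioo (-1 : ℝ) 1, ENNReal.ofReal (|f t| ^ p * w α β t)) *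
      (∫⁻ t in Ioo (-1 : ℝ) 1, ENNReal.ofReal (w 0 (-(β / (p - 1))) t)) ^ (p - 1) := by
  set B := max α 0 with hB
  have hB0 : 0 ≤ B := le_max_right _ _
  have hBα : 0 ≤ B - α := sub_nonneg.2 (le_max_left _ _)
  have hp0 : 0 < p := by linarith
  have hpq : p.HolderConjugate (p / (p - 1)) := Real.HolderConjugate.conjExponent hp
  have hx1 : 0 < 1 - x := by linarith [hx.2]
  have hsub : Ioo (-1 : ℝ) x ⊆ Ioo (-1 : ℝ) 1 := Ioo_subset_Ioo_right hx.2.le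
  set u : ℝ → ℝ≥0∞ := fun t =>
    ENNReal.ofReal (|f t| * ((1 - t) ^ (B / p) * (1 + t) ^ (β / p))) with hu
  set v : ℝ → ℝ≥0∞ := fun t => ENNReal.ofReal ((1 + t) ^ (-(β / p))) with hv
  have hum : Measurable u := by rw [hu]; fun_prop
  have hvm : Measurable v := by rw [hv]; fun_prop
  have step1 : (∫⁻ t in Ioo (-1 : ℝ) x, ENNReal.ofReal |f t|) * ENNReal.ofReal ((1 - x) ^ (B / p))
      ≤ ∫⁻ t in Ioo (-1 : ℝ) x, (u * v) t := by
    rw [← lintegral_mul_const _ (by fun_prop)]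
    refine setLIntegral_mono (hum.mul hvm) ?_
    intro t ht
    have h1 : 0 < 1 + t := by linarith [ht.1]
    have h2 : 0 < 1 - t := by linarith [ht.2]
    simp only [hu, hv, Pi.mul_apply]
    rw [← ENNReal.ofReal_mul (by positivity), ← ENNReal.ofReal_mul (by positivity)]
    apply ENNReal.ofReal_le_ofReal
    rw [Real.rpow_neg h1.le]
    have : |f t| * ((1 - t) ^ (B / p) * (1 + t) ^ (β / p)) * ((1 + t) ^ (β / p))⁻¹
      = |f t| * (1 - t) ^ (B / p) := by
      have : (1 + t) ^ (β / p) ≠ 0 := by positivity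
      field_simp
    rw [this]
    gcongr
    exact ht.2.le
  have step2 := ENNReal.lintegral_mul_le_Lp_mul_Lq (volume.restrict (Ioo (-1 : ℝ) x)) hpq
    hum.aemeasurable hvm.aemeasurable
  have hU : ∫⁻ t in Ioo (-1 : ℝ) x, u t ^ p ≤ ENNReal.ofReal (2 ^ (B - α)) *
      (∫⁻ t in Ioo (-1 : ℝ) 1, ENNReal.ofReal (|f t| ^ p * w α β t)) := by
    have hwm := w_meas_aux α β
    refine (lintegral_mono_set hsub).trans ?_
    rw [← lintegral_const_mul _ (by fun_prop)]
    refine setLIntegral_mono (by fun_prop) ?_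
    intro t ht
    have h1 : 0 < 1 + t := by linarith [ht.1]
    have h2 : 0 < 1 - t := by linarith [ht.2]
    have h3 : 1 - t ≤ 2 := by linarith [ht.1]
    simp only [hu]
    rw [ENNReal.ofReal_rpow_of_nonneg (by positivity) hp0.le, ← ENNReal.ofReal_mul (by positivity)]
    apply ENNReal.ofReal_le_ofReal
    rw [Real.mul_rpow (by positivity) (by positivity), Real.mul_rpow (by positivity) (by positivity),
      ← Real.rpow_mul h2.le, ← Real.rpow_mul h1.le, div_mul_cancel₀ _ hp0.ne',
      div_mul_cancel₀ _ hp0.ne']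
    have : (1 - t) ^ B = (1 - t) ^ (B - α) * (1 - t) ^ α := by
      rw [← Real.rpow_add h2]; ring_nf
    rw [this]
    have h4 : (1 - t) ^ (B - α) ≤ 2 ^ (B - α) := by gcongr
    calc _ = (1 - t) ^ (B - α) * (|f t| ^ p * w α β t) := by unfold w; ring
      _ ≤ _ := by
        apply mul_le_mul_of_nonneg_right h4
        exact mul_nonneg (by positivity) (w_nonneg_aux _ _ _ ht)
  have hV : ∫⁻ t in Ioo (-1 : ℝ) x, v t ^ (p / (p - 1)) ≤
      ∫⁻ t in Ioo (-1 : ℝ) 1, ENNReal.ofReal (w 0 (-(β / (p - 1))) t) := by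
    have hwm := w_meas_aux 0 (-(β / (p - 1)))
    refine (lintegral_mono_set hsub).trans ?_
    refine setLIntegral_mono (by fun_prop) ?_
    intro t ht
    have h1 : 0 < 1 + t := by linarith [ht.1]
    have hp1 : 0 < p - 1 := by linarith
    simp only [hv]
    rw [ENNReal.ofReal_rpow_of_nonneg (by positivity) (by positivity), ← Real.rpow_mul h1.le]
    apply le_of_eq
    unfold w
    rw [Real.rpow_zero, one_mul]
    congr 2
    field_simp
  have step3 := step1.trans (step2.trans
    (mul_le_mul' (ENNReal.rpow_le_rpow hU (by positivity)) (ENNReal.rpow_le_rpow hV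
      (by have : 0 < p - 1 := by linarith
          positivity))))
  have step4 := ENNReal.rpow_le_rpow step3 hp0.le
  rw [ENNReal.mul_rpow_of_nonneg _ _ hp0.le, ENNReal.mul_rpow_of_nonneg _ _ hp0.le,
    ← ENNReal.rpow_mul, ← ENNReal.rpow_mul, ENNReal.ofReal_rpow_of_nonneg (by positivity) hp0.le,
    ← Real.rpow_mul hx1.le, div_mul_cancel₀ _ hp0.ne', div_mul_cancel₀ _ hp0.ne',
    ENNReal.rpow_one] at step4
  have e : 1 / (p / (p - 1)) * p = p - 1 := by
    have : p - 1 ≠ 0 := by linarith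
    field_simp
  rw [e] at step4
  exact step4

theorem suff_aux (α β : ℝ) (hα : -1 < α) (hβ : -1 < β) (p : ℝ) (hp : 1 < p) (h : β < p - 1) :
    ∃ c : ℝ, 0 < c ∧ ∀ f : ℝ → ℝ, Measurable f →
        IntegrableOn (fun x => |f x| ^ p * w α β x) (Ioo (-1 : ℝ) 1) →
        (∫ x in Ioo (-1 : ℝ) 1, (∫ t in Ioo (-1 : ℝ) x, |f t|) ^ p * w α β x) ^ (1 / p)
          ≤ c * (∫ x in Ioo (-1 : ℝ) 1, |f x| ^ p * w α β x) ^ (1 / p) := by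
  have hp0 : 0 < p := by linarith
  have hp1 : 0 < p - 1 := by linarith
  set B := max α 0 with hB
  have hBα : -1 < α - B := by
    rcases max_cases α 0 with ⟨h1, _⟩ | ⟨h1, _⟩ <;> rw [hB, h1] <;> linarith
  set D : ℝ≥0∞ := ENNReal.ofReal (2 ^ (B - α)) *
    (∫⁻ t in Ioo (-1 : ℝ) 1, ENNReal.ofReal (w 0 (-(β / (p - 1))) t)) ^ (p - 1) *
    ∫⁻ t in Ioo (-1 : ℝ) 1, ENNReal.ofReal (w (α - B) β t) with hD
  have hDtop : D ≠ ⊤ := by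
    refine ENNReal.mul_ne_top (ENNReal.mul_ne_top ENNReal.ofReal_ne_top ?_)
      (w_lint_aux _ _ hBα hβ).ne
    refine ENNReal.rpow_ne_top_of_nonneg hp1.le (w_lint_aux _ _ (by norm_num) ?_).ne
    have : β / (p - 1) < 1 := by rw [div_lt_one hp1]; exact h
    linarith
  refine ⟨(D.toReal + 1) ^ (1 / p), by positivity, ?_⟩
  intro f hf hint
  have hFmono : Monotone (fun x : ℝ => ∫⁻ t in Ioo (-1 : ℝ) x, ENNReal.ofReal |f t|) := by
    intro x y hxy
    exact lintegral_mono_set (Ioo_subset_Ioo_right hxy)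
  have hFeq : ∀ x : ℝ, ∫ t in Ioo (-1 : ℝ) x, |f t| =
      (∫⁻ t in Ioo (-1 : ℝ) x, ENNReal.ofReal |f t|).toReal := by
    intro x
    exact integral_eq_lintegral_of_nonneg_ae (Filter.Eventually.of_forall fun t => abs_nonneg _)
      (by fun_prop)
  have hFm := hFmono.measurable
  have hwm := w_meas_aux α β
  have hN0 : ∀ᵐ x ∂(volume.restrict (Ioo (-1 : ℝ) 1)), 0 ≤ |f x| ^ p * w α β x := by
    refine (ae_restrict_iff' measurableSet_Ioo).2 (Filter.Eventually.of_forall fun x hx => ?_)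
    exact mul_nonneg (by positivity) (w_nonneg_aux _ _ _ hx)
  have hNeq : ∫ x in Ioo (-1 : ℝ) 1, |f x| ^ p * w α β x =
      (∫⁻ x in Ioo (-1 : ℝ) 1, ENNReal.ofReal (|f x| ^ p * w α β x)).toReal :=
    integral_eq_lintegral_of_nonneg_ae hN0 hint.aestronglyMeasurable
  have hNtop := hint.lintegral_lt_top.ne
  set N := ∫⁻ x in Ioo (-1 : ℝ) 1, ENNReal.ofReal (|f x| ^ p * w α β x) with hN
  have hmain : ∫ x in Ioo (-1 : ℝ) 1, (∫ t in Ioo (-1 : ℝ) x, |f t|) ^ p * w α β x ≤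
      (D * N).toReal := by
    rw [integral_eq_lintegral_of_nonneg_ae]
    · apply ENNReal.toReal_mono (ENNReal.mul_ne_top hDtop hNtop)
      have hwm2 := w_meas_aux (α - B) β
      rw [hD, mul_assoc, mul_comm (lintegral _ _) N, ← mul_assoc]
      rw [← lintegral_const_mul _ (by fun_prop)]
      refine setLIntegral_mono (by fun_prop) ?_
      intro x hx
      have h1 : 0 < 1 + x := by linarith [hx.1]
      have h2 : 0 < 1 - x := by linarith [hx.2]
      have hpt := hardy_pt_aux α β p hp f hf x hx
      have hwB : w α β x = (1 - x) ^ B * w (α - B) β x := by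
        unfold w
        rw [← mul_assoc, ← Real.rpow_add h2]; ring_nf
      rw [hFeq, hwB, ENNReal.ofReal_mul (by positivity), ENNReal.ofReal_mul (by positivity),
        ← mul_assoc, ← ENNReal.ofReal_rpow_of_nonneg ENNReal.toReal_nonneg hp0.le]
      refine mul_le_mul_left ?_ _
      refine le_trans (mul_le_mul_left (ENNReal.rpow_le_rpow ENNReal.ofReal_toReal_le hp0.le) _)
        (hpt.trans (le_of_eq ?_))
      ring
    · refine (ae_restrict_iff' measurableSet_Ioo).2 (Filter.Eventually.of_forall fun x hx => ?_)
      refine mul_nonneg (Real.rpow_nonneg ?_ _) (w_nonneg_aux _ _ _ hx)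
      exact integral_nonneg fun t => abs_nonneg _
    · simp_rw [hFeq]
      exact ((hFm.ennreal_toReal.pow_const p).mul hwm).aestronglyMeasurable
  rw [hNeq, ← Real.mul_rpow (by positivity) ENNReal.toReal_nonneg]
  refine Real.rpow_le_rpow ?_ (hmain.trans ?_) (by positivity)
  · refine setIntegral_nonneg measurableSet_Ioo fun x hx => ?_
    refine mul_nonneg (Real.rpow_nonneg ?_ _) (w_nonneg_aux _ _ _ hx)
    exact integral_nonneg fun t => abs_nonneg _
  · rw [ENNReal.toReal_mul]
    have : 0 ≤ N.toReal := ENNReal.toReal_nonneg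
    nlinarith

theorem nec_aux (α β : ℝ) (hα : -1 < α) (hβ : -1 < β) (p : ℝ) (hp : 1 < p) (hb : p - 1 ≤ β)
    (c : ℝ) (hc : 0 < c) (H : ∀ f : ℝ → ℝ, Measurable f →
        IntegrableOn (fun x => |f x| ^ p * w α β x) (Ioo (-1 : ℝ) 1) →
        (∫ x in Ioo (-1 : ℝ) 1, (∫ t in Ioo (-1 : ℝ) x, |f t|) ^ p * w α β x) ^ (1 / p)
          ≤ c * (∫ x in Ioo (-1 : ℝ) 1, |f x| ^ p * w α β x) ^ (1 / p)) (L : ℝ) (hL : 0 < L) :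
    L ^ p * (∫ x in Ioo (0 : ℝ) 1, w α β x) ≤ c ^ p * (2 ^ |α| * L) := by
  have hp0 : 0 < p := by linarith
  set ε := Real.exp (-L) with hε
  have hε0 : 0 < ε := Real.exp_pos _
  have hε1 : ε < 1 := by rw [hε, Real.exp_lt_one_iff]; linarith
  set s := Ioo (-1 + ε) 0 with hs
  have hs1 : s ⊆ Ioo (-1 : ℝ) 1 := fun t ht => ⟨by linarith [ht.1], by linarith [ht.2]⟩
  set f : ℝ → ℝ := s.indicator (fun t => (1 + t)⁻¹) with hf
  have hfm : Measurable f := by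
    refine Measurable.indicator (by fun_prop) measurableSet_Ioo
  have hf0 : ∀ t, 0 ≤ f t := by
    intro t
    refine indicator_nonneg (fun t ht => ?_) t
    have : 0 < 1 + t := by linarith [ht.1]
    positivity
  have hfabs : ∀ t, |f t| = f t := fun t => abs_of_nonneg (hf0 t)
  have hinvInt : IntegrableOn (fun t : ℝ => (1 + t)⁻¹) s := by
    have : ContinuousOn (fun t : ℝ => (1 + t)⁻¹) (Icc (-1 + ε) 0) := by
      apply ContinuousOn.inv₀ (by fun_prop)
      intro t ht; have := ht.1; linarith
    exact this.integrableOn_Icc.mono_set Ioo_subset_Icc_self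
  have hfI : Integrable f := hinvInt.integrable_indicator measurableSet_Ioo
  have hinv : ∫ t in s, (1 + t)⁻¹ = L := by
    rw [hs, ← integral_Ioc_eq_integral_Ioo, ← intervalIntegral.integral_of_le (by linarith)]
    rw [intervalIntegral.integral_comp_add_left (fun t => t⁻¹) 1]
    rw [integral_inv_of_pos (by linarith) (by norm_num)]
    simp [hε, Real.log_exp]
  have hM : ∀ t ∈ s, |f t| ^ p * w α β t ≤ 2 ^ |α| * (1 + t)⁻¹ := by
    intro t ht
    have h1 : 0 < 1 + t := by linarith [ht.1]
    have h1' : 1 + t ≤ 1 := by linarith [ht.2]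
    have h2 : 1 ≤ 1 - t := by linarith [ht.2]
    have h3 : 1 - t ≤ 2 := by linarith [ht.1]
    rw [hfabs, hf, indicator_of_mem ht]
    have e1 : (1 - t) ^ α ≤ 2 ^ |α| :=
      (Real.rpow_le_rpow_of_exponent_le h2 (le_abs_self α)).trans (by gcongr)
    have e2 : ((1 + t)⁻¹) ^ p * (1 + t) ^ β ≤ (1 + t)⁻¹ := by
      rw [Real.inv_rpow h1.le, ← Real.rpow_neg h1.le, ← Real.rpow_add h1, ← Real.rpow_neg_one]
      exact Real.rpow_le_rpow_of_exponent_ge h1 h1' (by linarith)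
    calc _ = (1 - t) ^ α * (((1 + t)⁻¹) ^ p * (1 + t) ^ β) := by unfold w; ring
      _ ≤ _ := mul_le_mul e1 e2 (by positivity) (by positivity)
  have hgind : (fun x => |f x| ^ p * w α β x) =
      s.indicator (fun x => |f x| ^ p * w α β x) := by
    funext x
    by_cases hxs : x ∈ s
    · rw [indicator_of_mem hxs]
    · rw [indicator_of_notMem hxs, hf, indicator_of_notMem hxs, abs_zero,
        Real.zero_rpow hp0.ne', zero_mul]
  have hgm : Measurable (fun x => |f x| ^ p * w α β x) := by
    have := w_meas_aux α β
    fun_prop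
  have hgs : IntegrableOn (fun x => |f x| ^ p * w α β x) s := by
    refine Integrable.mono' (hinvInt.const_mul (2 ^ |α|)) hgm.aestronglyMeasurable ?_
    refine (ae_restrict_iff' measurableSet_Ioo).2 (Filter.Eventually.of_forall fun x hx => ?_)
    rw [Real.norm_of_nonneg (mul_nonneg (by positivity) (w_nonneg_aux _ _ _ (hs1 hx)))]
    exact hM x hx
  have hgI : IntegrableOn (fun x => |f x| ^ p * w α β x) (Ioo (-1 : ℝ) 1) := by
    rw [hgind]
    exact (hgs.integrable_indicator measurableSet_Ioo).integrableOn
  have hR : ∫ x in Ioo (-1 : ℝ) 1, |f x| ^ p * w α β x ≤ 2 ^ |α| * L := by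
    rw [hgind, setIntegral_indicator measurableSet_Ioo, inter_eq_self_of_subset_right hs1,
      ← hinv, ← integral_const_mul]
    exact setIntegral_mono_on hgs (hinvInt.const_mul _) measurableSet_Ioo hM
  have hFmono : Monotone (fun x : ℝ => ∫ t in Ioo (-1 : ℝ) x, |f t|) := by
    intro x y hxy
    exact setIntegral_mono_set hfI.abs.integrableOn
      (Filter.Eventually.of_forall fun t => abs_nonneg _)
      (Ioo_subset_Ioo_right hxy).eventuallyLE
  have hF0 : ∀ x : ℝ, 0 ≤ ∫ t in Ioo (-1 : ℝ) x, |f t| :=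
    fun x => integral_nonneg fun t => abs_nonneg _
  have hFL : ∀ x : ℝ, 0 ≤ x → ∫ t in Ioo (-1 : ℝ) x, |f t| = L := by
    intro x hx
    simp_rw [hfabs]
    rw [hf, setIntegral_indicator measurableSet_Ioo, inter_eq_self_of_subset_right, hinv]
    exact fun t ht => ⟨by linarith [ht.1], by linarith [ht.2]⟩
  have hFle : ∀ x : ℝ, ∫ t in Ioo (-1 : ℝ) x, |f t| ≤ L := by
    intro x
    rw [← hFL (max x 0) (le_max_right _ _)]
    exact hFmono (le_max_left _ _)
  have hwI := w_integrableOn_aux α β hα hβ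
  have hLI : IntegrableOn (fun x => (∫ t in Ioo (-1 : ℝ) x, |f t|) ^ p * w α β x)
      (Ioo (-1 : ℝ) 1) := by
    refine Integrable.mono' (hwI.const_mul (L ^ p))
      ((hFmono.measurable.pow_const p).mul (w_meas_aux α β)).aestronglyMeasurable ?_
    refine (ae_restrict_iff' measurableSet_Ioo).2 (Filter.Eventually.of_forall fun x hx => ?_)
    have hw := w_nonneg_aux α β x hx
    rw [Real.norm_of_nonneg (mul_nonneg (Real.rpow_nonneg (hF0 x) _) hw)]
    exact mul_le_mul_of_nonneg_right (Real.rpow_le_rpow (hF0 x) (hFle x) hp0.le) hw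
  have hsub : Ioo (0 : ℝ) 1 ⊆ Ioo (-1 : ℝ) 1 := Ioo_subset_Ioo_left (by norm_num)
  have hLow : L ^ p * (∫ x in Ioo (0 : ℝ) 1, w α β x) ≤
      ∫ x in Ioo (-1 : ℝ) 1, (∫ t in Ioo (-1 : ℝ) x, |f t|) ^ p * w α β x := by
    calc _ = ∫ x in Ioo (0 : ℝ) 1, (∫ t in Ioo (-1 : ℝ) x, |f t|) ^ p * w α β x := by
          rw [← integral_const_mul]
          refine setIntegral_congr_fun measurableSet_Ioo fun x hx => ?_
          simp only [hFL x hx.1.le]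
      _ ≤ _ := by
          refine setIntegral_mono_set hLI ?_ hsub.eventuallyLE
          refine (ae_restrict_iff' measurableSet_Ioo).2 (Filter.Eventually.of_forall fun x hx => ?_)
          exact mul_nonneg (Real.rpow_nonneg (hF0 x) _) (w_nonneg_aux α β x hx)
  have hK0 : 0 ≤ ∫ x in Ioo (0 : ℝ) 1, w α β x :=
    setIntegral_nonneg measurableSet_Ioo fun x hx => w_nonneg_aux α β x (hsub hx)
  have hR0 : 0 ≤ ∫ x in Ioo (-1 : ℝ) 1, |f x| ^ p * w α β x :=
    setIntegral_nonneg measurableSet_Ioo fun x hx =>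
      mul_nonneg (by positivity) (w_nonneg_aux α β x hx)
  have hfin := H f hfm hgI
  have hA0 := (mul_nonneg (Real.rpow_nonneg hL.le p) hK0).trans hLow
  have h5 := Real.rpow_le_rpow (by positivity) hfin hp0.le
  rw [Real.mul_rpow hc.le (by positivity), ← Real.rpow_mul hA0, ← Real.rpow_mul hR0,
    one_div_mul_cancel hp0.ne', Real.rpow_one, Real.rpow_one] at h5
  exact hLow.trans (h5.trans (by gcongr))

theorem statement14 (α β : ℝ) (hα : -1 < α) (hβ : -1 < β) (p : ℝ) (hp : 1 < p) :
    (∃ c : ℝ, 0 < c ∧ ∀ f : ℝ → ℝ, Measurable f →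
        IntegrableOn (fun x => |f x| ^ p * w α β x) (Ioo (-1 : ℝ) 1) →
        (∫ x in Ioo (-1 : ℝ) 1, (∫ t in Ioo (-1 : ℝ) x, |f t|) ^ p * w α β x) ^ (1 / p)
          ≤ c * (∫ x in Ioo (-1 : ℝ) 1, |f x| ^ p * w α β x) ^ (1 / p))
      ↔ β < p - 1 := by
  refine ⟨?_, suff_aux α β hα hβ p hp⟩
  rintro ⟨c, hc, H⟩
  by_contra! hb
  have hp1 : 0 < p - 1 := by linarith
  have hsub : Ioo (0 : ℝ) 1 ⊆ Ioo (-1 : ℝ) 1 := Ioo_subset_Ioo_left (by norm_num)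
  have hK : 0 < ∫ x in Ioo (0 : ℝ) 1, w α β x := by
    rw [← integral_Ioc_eq_integral_Ioo, ← intervalIntegral.integral_of_le (by norm_num)]
    refine intervalIntegral.intervalIntegral_pos_of_pos_on ?_
      (fun x hx => w_pos_aux α β x (hsub hx)) (by norm_num)
    rw [intervalIntegrable_iff_integrableOn_Ioo_of_le (by norm_num)]
    exact (w_integrableOn_aux α β hα hβ).mono_set hsub
  set K := ∫ x in Ioo (0 : ℝ) 1, w α β x with hKdef
  set D := c ^ p * 2 ^ |α| / K with hD
  have hD0 : 0 < D := by positivity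
  have hL : 0 < (D + 1) ^ (1 / (p - 1)) := by positivity
  have h := nec_aux α β hα hβ p hp hb c hc H _ hL
  set L := (D + 1) ^ (1 / (p - 1)) with hLdef
  have hLp : L ^ p = (D + 1) * L := by
    have : L ^ (p - 1) = D + 1 := by
      rw [hLdef, ← Real.rpow_mul (by positivity), one_div_mul_cancel hp1.ne', Real.rpow_one]
    rw [← this, ← Real.rpow_add_one hL.ne']
    ring_nf
  rw [hLp, ← hKdef] at h
  have hDK : c ^ p * 2 ^ |α| = D * K := by rw [hD]; field_simp
  have : 0 < K * L := by positivity
  nlinarith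

end JacobiApprox
end
end
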